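/- Let d_x, d_y be positive integers, let μ be a Borel probability measure on ℝ^{d_x} and ν a Borel probability measure on ℝ^{d_y}, both with finite fourth moments, and set M := sqrt(M₂(μ) M₂(ν)). Define F₂(μ,ν) := inf_{π ∈ Π(μ,ν)} −2 ∬ ⟨x,x'⟩⟨y,y'⟩ dπ⊗π(x,y,x',y'), and for A ∈ ℝ^{d_x×d_y} let IOT_A(μ,ν) be the optimal transport cost between μ and ν with cost c_A(x,y) = −8 xᵀ A y. Then F₂(μ,ν) = inf_{A ∈ ℝ^{d_x×d_y}} ( 8‖A‖_F² + IOT_A(μ,ν) ), and the infimum is achieved at some A* in the rectangle [−M/2, M/2]^{d_x×d_y}. Moreover, denoting by π*_A an optimal coupling for IOT_A(μ,ν): (i) if A* achieves the infimum, then π*_{A*} is an optimal coupling for IGW(μ,ν) and A* = (1/2)∫ x yᵀ dπ*_{A*}(x,y); (ii) conversely, there exists an optimal IGW coupling π* ∈ Π(μ,ν) such that A* = (1/2)∫ x yᵀ dπ*(x,y), in which case π*_{A*} = π*. -/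

import Mathlib

open MeasureTheory Filter Matrix Set
open scoped RealInnerProductSpace ENNReal NNReal

noncomputable section

abbrev Ed (d : ℕ) : Type := EuclideanSpace ℝ (Fin d)

variable {dx dy : ℕ}

/-- Second (absolute, uncentered) moment. -/
def M2 {d : ℕ} (μ : Measure (Ed d)) : ℝ := ∫ x, ‖x‖ ^ 2 ∂μ

/-- Couplings of `μ` on `ℝ^{dx}` and `ν` on `ℝ^{dy}`. -/
def IsCoupling (π : Measure (Ed dx × Ed dy)) (μ : Measure (Ed dx)) (ν : Measure (Ed dy)) :
    Prop :=
  π.map Prod.fst = μ ∧ π.map Prod.snd = ν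

/-- The inner-product GW distortion cost of a coupling. -/
def igwCost (π : Measure (Ed dx × Ed dy)) : ℝ :=
  ∫ p, (⟪p.1.1, p.2.1⟫ - ⟪p.1.2, p.2.2⟫) ^ 2 ∂(π.prod π)

/-- The inner-product Gromov-Wasserstein distance. -/
def IGW (μ : Measure (Ed dx)) (ν : Measure (Ed dy)) : ℝ :=
  Real.sqrt (sInf {c : ℝ | ∃ π : Measure (Ed dx × Ed dy), IsCoupling π μ ν ∧ c = igwCost π})

/-- Optimal IGW coupling. -/
def IsOptIGW (π : Measure (Ed dx × Ed dy)) (μ : Measure (Ed dx)) (ν : Measure (Ed dy)) :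
    Prop :=
  IsCoupling π μ ν ∧
    ∀ π' : Measure (Ed dx × Ed dy), IsCoupling π' μ ν → igwCost π ≤ igwCost π'

/-- Uncentered cross-covariance matrix `∫ x yᵀ dπ` of a coupling. -/
def crossCov (π : Measure (Ed dx × Ed dy)) : Matrix (Fin dx) (Fin dy) ℝ :=
  Matrix.of fun i j => ∫ p, p.1 i * p.2 j ∂π

/-- Squared Frobenius norm. -/
def frobSq (A : Matrix (Fin dx) (Fin dy) ℝ) : ℝ := ∑ i, ∑ j, A i j ^ 2

/-- Optimal transport cost with cost function `c`. -/
def otCost (c : Ed dx → Ed dy → ℝ) (μ : Measure (Ed dx)) (ν : Measure (Ed dy)) : ℝ :=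
  sInf {v : ℝ | ∃ π : Measure (Ed dx × Ed dy), IsCoupling π μ ν ∧ v = ∫ p, c p.1 p.2 ∂π}

/-- The cost `c_A(x,y) = -8 xᵀ A y`. -/
def costA (A : Matrix (Fin dx) (Fin dy) ℝ) : Ed dx → Ed dy → ℝ :=
  fun x y => -8 * ∑ i, ∑ j, x i * A i j * y j

/-- `IOT_A(μ,ν)`: the OT problem with cost `c_A`. -/
def IOT (A : Matrix (Fin dx) (Fin dy) ℝ) (μ : Measure (Ed dx)) (ν : Measure (Ed dy)) : ℝ :=
  otCost (costA A) μ ν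

/-- An optimal coupling for the OT problem with cost `c`. -/
def IsOptOT (c : Ed dx → Ed dy → ℝ) (π : Measure (Ed dx × Ed dy)) (μ : Measure (Ed dx))
    (ν : Measure (Ed dy)) : Prop :=
  IsCoupling π μ ν ∧ ∀ π' : Measure (Ed dx × Ed dy), IsCoupling π' μ ν →
    (∫ p, c p.1 p.2 ∂π) ≤ ∫ p, c p.1 p.2 ∂π'

/-- `F₂(μ,ν) = inf_{π ∈ Π(μ,ν)} -2 ∬ ⟨x,x'⟩⟨y,y'⟩ dπ⊗π`. -/
def F2 (μ : Measure (Ed dx)) (ν : Measure (Ed dy)) : ℝ :=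
  sInf {v : ℝ | ∃ π : Measure (Ed dx × Ed dy), IsCoupling π μ ν ∧
    v = -2 * ∫ p, ⟪p.1.1, p.2.1⟫ * ⟪p.1.2, p.2.2⟫ ∂(π.prod π)}

lemma coupling_prob {π : Measure (Ed dx × Ed dy)} {μ : Measure (Ed dx)} {ν : Measure (Ed dy)}
    (hμ : IsProbabilityMeasure μ) (h : IsCoupling π μ ν) : IsProbabilityMeasure π := by
  constructor
  have h1 : (π.map Prod.fst) Set.univ = 1 := by rw [h.1]; exact measure_univ
  rwa [Measure.map_apply measurable_fst MeasurableSet.univ, Set.preimage_univ] at h1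

lemma coupling_int_fst {π : Measure (Ed dx × Ed dy)} {μ : Measure (Ed dx)} {ν : Measure (Ed dy)}
    (h : IsCoupling π μ ν) {f : Ed dx → ℝ} (hf : Integrable f μ) :
    Integrable (fun p : Ed dx × Ed dy => f p.1) π := by
  rw [← h.1] at hf
  exact hf.comp_measurable measurable_fst

lemma coupling_int_snd {π : Measure (Ed dx × Ed dy)} {μ : Measure (Ed dx)} {ν : Measure (Ed dy)}
    (h : IsCoupling π μ ν) {f : Ed dy → ℝ} (hf : Integrable f ν) :
    Integrable (fun p : Ed dx × Ed dy => f p.2) π := by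
  rw [← h.2] at hf
  exact hf.comp_measurable measurable_snd

lemma coupling_integral_fst {π : Measure (Ed dx × Ed dy)} {μ : Measure (Ed dx)}
    {ν : Measure (Ed dy)} (h : IsCoupling π μ ν) {f : Ed dx → ℝ} (hf : Integrable f μ) :
    ∫ p, f p.1 ∂π = ∫ x, f x ∂μ := by
  rw [← h.1] at hf ⊢
  exact (integral_map measurable_fst.aemeasurable hf.1).symm

lemma coupling_integral_snd {π : Measure (Ed dx × Ed dy)} {μ : Measure (Ed dx)}
    {ν : Measure (Ed dy)} (h : IsCoupling π μ ν) {f : Ed dy → ℝ} (hf : Integrable f ν) :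
    ∫ p, f p.2 ∂π = ∫ x, f x ∂ν := by
  rw [← h.2] at hf ⊢
  exact (integral_map measurable_snd.aemeasurable hf.1).symm

lemma int_sq {d : ℕ} {μ : Measure (Ed d)} (hμ : IsProbabilityMeasure μ)
    (h4 : Integrable (fun x => ‖x‖ ^ 4) μ) : Integrable (fun x => ‖x‖ ^ 2) μ := by
  refine ((integrable_const (1 : ℝ)).add h4).mono' (by fun_prop) (ae_of_all _ fun x => ?_)
  simp only [Pi.add_apply, Real.norm_eq_abs]
  rw [abs_of_nonneg (by positivity)]
  nlinarith [sq_nonneg (‖x‖ ^ 2 - 1), sq_nonneg (‖x‖ ^ 2)]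

lemma coord_sq_le {d : ℕ} (x : Ed d) (i : Fin d) : x i ^ 2 ≤ ‖x‖ ^ 2 := by
  rw [EuclideanSpace.real_norm_sq_eq]
  exact Finset.single_le_sum (f := fun i => x i ^ 2) (fun j _ => sq_nonneg _) (Finset.mem_univ i)

lemma int_coord_sq {d : ℕ} {μ : Measure (Ed d)} (hμ : IsProbabilityMeasure μ)
    (h4 : Integrable (fun x => ‖x‖ ^ 4) μ) (i : Fin d) : Integrable (fun x : Ed d => x i ^ 2) μ := by
  refine (int_sq hμ h4).mono' (by fun_prop) (ae_of_all _ fun x => ?_)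
  rw [Real.norm_eq_abs, abs_of_nonneg (by positivity)]
  exact coord_sq_le x i

lemma int_mul {π : Measure (Ed dx × Ed dy)} {μ : Measure (Ed dx)} {ν : Measure (Ed dy)}
    (hμ : IsProbabilityMeasure μ) (hν : IsProbabilityMeasure ν)
    (hμ4 : Integrable (fun x => ‖x‖ ^ 4) μ) (hν4 : Integrable (fun y => ‖y‖ ^ 4) ν)
    (h : IsCoupling π μ ν) (i : Fin dx) (j : Fin dy) :
    Integrable (fun p : Ed dx × Ed dy => p.1 i * p.2 j) π := by
  refine ((coupling_int_fst h (int_coord_sq hμ hμ4 i)).add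
    (coupling_int_snd h (int_coord_sq hν hν4 j))).mono' (by fun_prop) (ae_of_all _ fun p => ?_)
  simp only [Pi.add_apply, Real.norm_eq_abs]
  rw [abs_le]
  constructor <;> nlinarith [sq_nonneg (p.1 i - p.2 j), sq_nonneg (p.1 i + p.2 j)]

lemma crossCov_bound {π : Measure (Ed dx × Ed dy)} {μ : Measure (Ed dx)} {ν : Measure (Ed dy)}
    (hμ : IsProbabilityMeasure μ) (hν : IsProbabilityMeasure ν)
    (hμ4 : Integrable (fun x => ‖x‖ ^ 4) μ) (hν4 : Integrable (fun y => ‖y‖ ^ 4) ν)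
    (h : IsCoupling π μ ν) (i : Fin dx) (j : Fin dy) :
    |crossCov π i j| ≤ Real.sqrt (M2 μ * M2 ν) := by
  have hx := coupling_int_fst h (int_coord_sq hμ hμ4 i)
  have hy := coupling_int_snd h (int_coord_sq hν hν4 j)
  have hxy := int_mul hμ hν hμ4 hν4 h i j
  set a := ∫ p : Ed dx × Ed dy, p.1 i ^ 2 ∂π with ha
  set b := ∫ p : Ed dx × Ed dy, p.2 j ^ 2 ∂π with hb
  set c := ∫ p : Ed dx × Ed dy, p.1 i * p.2 j ∂π with hc
  have key : ∀ t : ℝ, 0 ≤ a * (t * t) + (2 * c) * t + b := by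
    intro t
    have e : a * (t * t) + (2 * c) * t + b
        = ∫ p : Ed dx × Ed dy, (t * p.1 i + p.2 j) ^ 2 ∂π := by
      have : (fun p : Ed dx × Ed dy => (t * p.1 i + p.2 j) ^ 2)
          = fun p => (t * t) * p.1 i ^ 2 + (2 * t) * (p.1 i * p.2 j) + p.2 j ^ 2 := by
        funext p; ring
      have k1 := hx.const_mul (t * t)
      have k2 := hxy.const_mul (2 * t)
      have k3 : Integrable (fun p : Ed dx × Ed dy =>
        (t * t) * p.1 i ^ 2 + (2 * t) * (p.1 i * p.2 j)) π := k1.add k2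
      rw [this, integral_add k3 hy, integral_add k1 k2, integral_const_mul, integral_const_mul]
      ring
    rw [e]
    exact integral_nonneg fun p => sq_nonneg _
  have hd := discrim_le_zero key
  have ha0 : 0 ≤ a := integral_nonneg fun p => sq_nonneg _
  have hb0 : 0 ≤ b := integral_nonneg fun p => sq_nonneg _
  have haM : a ≤ M2 μ := by
    rw [ha, coupling_integral_fst h (f := fun x => x i ^ 2) (int_coord_sq hμ hμ4 i)]
    exact integral_mono (int_coord_sq hμ hμ4 i) (int_sq hμ hμ4) fun x => coord_sq_le x i
  have hbM : b ≤ M2 ν := by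
    rw [hb, coupling_integral_snd h (f := fun x => x j ^ 2) (int_coord_sq hν hν4 j)]
    exact integral_mono (int_coord_sq hν hν4 j) (int_sq hν hν4) fun x => coord_sq_le x j
  have : crossCov π i j = c := rfl
  rw [this]
  apply Real.abs_le_sqrt
  have := mul_le_mul haM hbM hb0 (ha0.trans haM)
  unfold discrim at hd
  nlinarith

lemma int_costA {π : Measure (Ed dx × Ed dy)} {μ : Measure (Ed dx)} {ν : Measure (Ed dy)}
    (hμ : IsProbabilityMeasure μ) (hν : IsProbabilityMeasure ν)
    (hμ4 : Integrable (fun x => ‖x‖ ^ 4) μ) (hν4 : Integrable (fun y => ‖y‖ ^ 4) ν)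
    (h : IsCoupling π μ ν) (A : Matrix (Fin dx) (Fin dy) ℝ) :
    ∫ p, costA A p.1 p.2 ∂π = -8 * ∑ i, ∑ j, A i j * crossCov π i j := by
  unfold costA
  rw [integral_const_mul]
  congr 1
  have e : ∀ i j, (fun p : Ed dx × Ed dy => p.1 i * A i j * p.2 j)
      = fun p => A i j * (p.1 i * p.2 j) := fun i j => by funext p; ring
  have hi : ∀ i j, Integrable (fun p : Ed dx × Ed dy => p.1 i * A i j * p.2 j) π := fun i j => by
    rw [e]; exact (int_mul hμ hν hμ4 hν4 h i j).const_mul _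
  rw [integral_finsetSum _ fun i _ => integrable_finsetSum _ fun j _ => hi i j]
  refine Finset.sum_congr rfl fun i _ => ?_
  rw [integral_finsetSum _ fun j _ => hi i j]
  refine Finset.sum_congr rfl fun j _ => ?_
  rw [e, integral_const_mul]
  rfl

lemma cost_identity {π : Measure (Ed dx × Ed dy)} {μ : Measure (Ed dx)} {ν : Measure (Ed dy)}
    (hμ : IsProbabilityMeasure μ) (hν : IsProbabilityMeasure ν)
    (hμ4 : Integrable (fun x => ‖x‖ ^ 4) μ) (hν4 : Integrable (fun y => ‖y‖ ^ 4) ν)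
    (h : IsCoupling π μ ν) (A : Matrix (Fin dx) (Fin dy) ℝ) :
    8 * frobSq A + ∫ p, costA A p.1 p.2 ∂π
      = 8 * frobSq (A - (1 / 2 : ℝ) • crossCov π) + -2 * frobSq (crossCov π) := by
  rw [int_costA hμ hν hμ4 hν4 h]
  simp only [frobSq, Finset.mul_sum, ← Finset.sum_add_distrib]
  refine Finset.sum_congr rfl fun i _ => Finset.sum_congr rfl fun j _ => ?_
  simp only [Matrix.sub_apply, Matrix.smul_apply, smul_eq_mul]
  ring

lemma inner_eq_sum {d : ℕ} (x y : Ed d) : ⟪x, y⟫ = ∑ i, x i * y i := by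
  rw [PiLp.inner_apply]
  exact Finset.sum_congr rfl fun i _ => by simp [mul_comm]

lemma cross_expand (p : (Ed dx × Ed dy) × (Ed dx × Ed dy)) :
    ⟪p.1.1, p.2.1⟫ * ⟪p.1.2, p.2.2⟫
      = ∑ i, ∑ j, (p.1.1 i * p.1.2 j) * (p.2.1 i * p.2.2 j) := by
  rw [inner_eq_sum, inner_eq_sum, Finset.sum_mul_sum]
  exact Finset.sum_congr rfl fun i _ => Finset.sum_congr rfl fun j _ => by ring

lemma int_cross {π : Measure (Ed dx × Ed dy)} {μ : Measure (Ed dx)} {ν : Measure (Ed dy)}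
    (hμ : IsProbabilityMeasure μ) (hν : IsProbabilityMeasure ν)
    (hμ4 : Integrable (fun x => ‖x‖ ^ 4) μ) (hν4 : Integrable (fun y => ‖y‖ ^ 4) ν)
    (h : IsCoupling π μ ν) :
    Integrable (fun p : (Ed dx × Ed dy) × (Ed dx × Ed dy) => ⟪p.1.1, p.2.1⟫ * ⟪p.1.2, p.2.2⟫)
      (π.prod π) ∧
    ∫ p, ⟪p.1.1, p.2.1⟫ * ⟪p.1.2, p.2.2⟫ ∂(π.prod π) = frobSq (crossCov π) := by
  have := coupling_prob hμ h
  have hi : ∀ i j, Integrable (fun p : (Ed dx × Ed dy) × (Ed dx × Ed dy) =>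
      (p.1.1 i * p.1.2 j) * (p.2.1 i * p.2.2 j)) (π.prod π) := fun i j =>
    (int_mul hμ hν hμ4 hν4 h i j).mul_prod (int_mul hμ hν hμ4 hν4 h i j)
  simp only [cross_expand]
  refine ⟨integrable_finsetSum _ fun i _ => integrable_finsetSum _ fun j _ => hi i j, ?_⟩
  rw [integral_finsetSum _ fun i _ => integrable_finsetSum _ fun j _ => hi i j]
  unfold frobSq
  refine Finset.sum_congr rfl fun i _ => ?_
  rw [integral_finsetSum _ fun j _ => hi i j]
  refine Finset.sum_congr rfl fun j _ => ?_
  rw [integral_prod_mul (fun q : Ed dx × Ed dy => q.1 i * q.2 j)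
    (fun q : Ed dx × Ed dy => q.1 i * q.2 j), sq]
  rfl

lemma int_inner_sq {d : ℕ} {μ : Measure (Ed d)} (hμ : IsProbabilityMeasure μ)
    (h4 : Integrable (fun x => ‖x‖ ^ 4) μ) :
    Integrable (fun p : Ed d × Ed d => ⟪p.1, p.2⟫ ^ 2) (μ.prod μ) := by
  refine ((int_sq hμ h4).mul_prod (int_sq hμ h4)).mono' (by fun_prop) (ae_of_all _ fun p => ?_)
  rw [Real.norm_eq_abs, abs_of_nonneg (by positivity), ← mul_pow]
  rw [← sq_abs]
  exact pow_le_pow_left₀ (abs_nonneg _) (abs_real_inner_le_norm _ _) 2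

lemma igw_eq {π : Measure (Ed dx × Ed dy)} {μ : Measure (Ed dx)} {ν : Measure (Ed dy)}
    (hμ : IsProbabilityMeasure μ) (hν : IsProbabilityMeasure ν)
    (hμ4 : Integrable (fun x => ‖x‖ ^ 4) μ) (hν4 : Integrable (fun y => ‖y‖ ^ 4) ν)
    (h : IsCoupling π μ ν) :
    igwCost π = (∫ p, ⟪p.1, p.2⟫ ^ 2 ∂(μ.prod μ)) + (∫ p, ⟪p.1, p.2⟫ ^ 2 ∂(ν.prod ν))
      - 2 * frobSq (crossCov π) := by
  have := coupling_prob hμ h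
  have m1 : (π.prod π).map (Prod.map Prod.fst Prod.fst) = μ.prod μ := by
    rw [← Measure.map_prod_map _ _ measurable_fst measurable_fst, h.1]
  have m2 : (π.prod π).map (Prod.map Prod.snd Prod.snd) = ν.prod ν := by
    rw [← Measure.map_prod_map _ _ measurable_snd measurable_snd, h.2]
  have i1 := int_inner_sq hμ hμ4
  have i2 := int_inner_sq hν hν4
  rw [← m1] at i1 ⊢
  rw [← m2] at i2 ⊢
  have q1 : Measurable (Prod.map Prod.fst Prod.fst :
    (Ed dx × Ed dy) × (Ed dx × Ed dy) → Ed dx × Ed dx) := measurable_fst.prodMap measurable_fst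
  have q2 : Measurable (Prod.map Prod.snd Prod.snd :
    (Ed dx × Ed dy) × (Ed dx × Ed dy) → Ed dy × Ed dy) := measurable_snd.prodMap measurable_snd
  rw [integral_map q1.aemeasurable i1.1, integral_map q2.aemeasurable i2.1]
  have j1 : Integrable (fun p : (Ed dx × Ed dy) × (Ed dx × Ed dy) => ⟪p.1.1, p.2.1⟫ ^ 2)
    (π.prod π) := i1.comp_measurable q1
  have j2 : Integrable (fun p : (Ed dx × Ed dy) × (Ed dx × Ed dy) => ⟪p.1.2, p.2.2⟫ ^ 2)
    (π.prod π) := i2.comp_measurable q2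
  have j12 : Integrable (fun p : (Ed dx × Ed dy) × (Ed dx × Ed dy) =>
    ⟪p.1.1, p.2.1⟫ ^ 2 + ⟪p.1.2, p.2.2⟫ ^ 2) (π.prod π) := j1.add j2
  simp only [Prod.map_fst, Prod.map_snd]
  obtain ⟨j3, e3⟩ := int_cross hμ hν hμ4 hν4 h
  rw [← e3, ← integral_const_mul, ← integral_add j1 j2,
    ← integral_sub j12 (j3.const_mul 2)]
  unfold igwCost
  congr 1
  funext p
  ring

/-- Truncation of a real number to `[-R, R]`. -/
def clipR (R t : ℝ) : ℝ := max (-R) (min t R)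

lemma clipR_abs {R : ℝ} (hR : 0 < R) (t : ℝ) : |clipR R t| ≤ R := by
  unfold clipR
  rw [abs_le]
  exact ⟨le_max_left _ _, max_le (by linarith) (min_le_right _ _)⟩

lemma clipR_sub {R : ℝ} (hR : 0 < R) (t : ℝ) : |t - clipR R t| ≤ t ^ 2 / R := by
  rw [le_div_iff₀ hR]
  unfold clipR
  rcases le_total t R with h | h
  · rw [min_eq_left h]
    rcases le_total (-R) t with h' | h'
    · rw [max_eq_right h']; simp; positivity
    · rw [max_eq_left h', abs_of_nonpos (by linarith)]
      nlinarith
  · rw [min_eq_right h, max_eq_right (by linarith), abs_of_nonneg (by linarith)]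
    nlinarith

/-- The set of couplings as a set of probability measures. -/
def cpl (μ : Measure (Ed dx)) (ν : Measure (Ed dy)) : Set (ProbabilityMeasure (Ed dx × Ed dy)) :=
  {P | IsCoupling (P : Measure (Ed dx × Ed dy)) μ ν}

lemma cpl_compact {μ : Measure (Ed dx)} {ν : Measure (Ed dy)}
    (hμ : IsProbabilityMeasure μ) (hν : IsProbabilityMeasure ν) : IsCompact (cpl μ ν) := by
  have hcl : IsClosed (cpl μ ν) := by
    have e : cpl μ ν =
        {P | P.map (measurable_fst (α := Ed dx) (β := Ed dy)).aemeasurable = ⟨μ, hμ⟩} ∩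
        {P | P.map (measurable_snd (α := Ed dx) (β := Ed dy)).aemeasurable = ⟨ν, hν⟩} := by
      ext P
      constructor
      · rintro ⟨h1, h2⟩
        exact ⟨ProbabilityMeasure.toMeasure_injective h1, ProbabilityMeasure.toMeasure_injective h2⟩
      · rintro ⟨h1, h2⟩
        exact ⟨congrArg ProbabilityMeasure.toMeasure h1, congrArg ProbabilityMeasure.toMeasure h2⟩
    rw [e]
    exact (isClosed_eq (ProbabilityMeasure.continuous_map continuous_fst) continuous_const).inter
      (isClosed_eq (ProbabilityMeasure.continuous_map continuous_snd) continuous_const)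
  rw [← hcl.closure_eq]
  apply isCompact_closure_of_isTightMeasureSet
  apply IsTightMeasureSet.prodMk
  · refine (isTightMeasureSet_singleton (μ := μ)).subset ?_
    rintro _ ⟨_, ⟨P, hP, rfl⟩, rfl⟩
    exact hP.1
  · refine (isTightMeasureSet_singleton (μ := ν)).subset ?_
    rintro _ ⟨_, ⟨P, hP, rfl⟩, rfl⟩
    exact hP.2

lemma crossCov_cont {μ : Measure (Ed dx)} {ν : Measure (Ed dy)}
    (hμ : IsProbabilityMeasure μ) (hν : IsProbabilityMeasure ν)
    (hμ4 : Integrable (fun x => ‖x‖ ^ 4) μ) (hν4 : Integrable (fun y => ‖y‖ ^ 4) ν)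
    (i : Fin dx) (j : Fin dy) :
    ContinuousOn (fun P : ProbabilityMeasure (Ed dx × Ed dy) =>
      crossCov (P : Measure (Ed dx × Ed dy)) i j) (cpl μ ν) := by
  apply continuousOn_of_uniform_approx_of_continuousOn
  rw [Metric.uniformity_basis_dist_le.forall_iff
    (fun s t hst H => by
      obtain ⟨F, hF, hF2⟩ := H
      exact ⟨F, hF, fun y hy => hst (hF2 y hy)⟩)]
  intro ε hε
  set K := (∫ x, ‖x‖ ^ 4 ∂μ) + ∫ y, ‖y‖ ^ 4 ∂ν with hK
  have hK0 : 0 ≤ K := add_nonneg (integral_nonneg fun x => by positivity)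
    (integral_nonneg fun x => by positivity)
  set R := (K + 1) / ε with hR
  have hR0 : 0 < R := by positivity
  have hcont : Continuous (fun p : Ed dx × Ed dy => clipR R (p.1 i * p.2 j)) := by
    unfold clipR; fun_prop
  let f : BoundedContinuousFunction (Ed dx × Ed dy) ℝ :=
    BoundedContinuousFunction.ofNormedAddCommGroup
      (fun p : Ed dx × Ed dy => clipR R (p.1 i * p.2 j)) hcont R (fun p => clipR_abs hR0 _)
  refine ⟨fun P => ∫ p, f p ∂(P : Measure (Ed dx × Ed dy)),
    (ProbabilityMeasure.continuous_integral_boundedContinuousFunction f).continuousOn,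
    fun P hP => ?_⟩
  have hxy := int_mul hμ hν hμ4 hν4 hP i j
  have hf : Integrable (fun p => f p) (P : Measure (Ed dx × Ed dy)) := f.integrable _
  have i1 := coupling_int_fst hP hμ4
  have i2 := coupling_int_snd hP hν4
  show dist (∫ p : Ed dx × Ed dy, p.1 i * p.2 j ∂(P : Measure (Ed dx × Ed dy)))
    (∫ p, f p ∂(P : Measure (Ed dx × Ed dy))) ≤ ε
  rw [dist_eq_norm, ← integral_sub hxy hf]
  have hle : ‖∫ p : Ed dx × Ed dy, (p.1 i * p.2 j - f p) ∂(P : Measure (Ed dx × Ed dy))‖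
      ≤ ∫ p : Ed dx × Ed dy, (‖p.1‖ ^ 4 + ‖p.2‖ ^ 4) * R⁻¹ ∂(P : Measure (Ed dx × Ed dy)) := by
    refine norm_integral_le_of_norm_le ((i1.add i2).mul_const _) (ae_of_all _ fun p => ?_)
    refine (clipR_sub hR0 (p.1 i * p.2 j)).trans ?_
    rw [div_eq_mul_inv]
    refine mul_le_mul_of_nonneg_right ?_ (by positivity)
    have h1 := coord_sq_le p.1 i
    have h2 := coord_sq_le p.2 j
    have h3 := mul_le_mul h1 h2 (sq_nonneg _) (sq_nonneg _)
    nlinarith [sq_nonneg (‖p.1‖ ^ 2 - ‖p.2‖ ^ 2), sq_nonneg (‖p.1‖ ^ 2), sq_nonneg (‖p.2‖ ^ 2)]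
  refine hle.trans ?_
  rw [integral_mul_const, integral_add i1 i2, coupling_integral_fst hP hμ4,
    coupling_integral_snd hP hν4, ← hK, hR, inv_div, mul_div_assoc', div_le_iff₀ (by positivity)]
  nlinarith

/-- Maximize any continuous function of the cross-covariance over couplings. -/
lemma exists_max {μ : Measure (Ed dx)} {ν : Measure (Ed dy)}
    (hμ : IsProbabilityMeasure μ) (hν : IsProbabilityMeasure ν)
    (hμ4 : Integrable (fun x => ‖x‖ ^ 4) μ) (hν4 : Integrable (fun y => ‖y‖ ^ 4) ν)
    (g : Matrix (Fin dx) (Fin dy) ℝ → ℝ) (hg : Continuous g) :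
    ∃ π, IsCoupling π μ ν ∧ ∀ π', IsCoupling π' μ ν → g (crossCov π) ≤ g (crossCov π') := by
  have hne : (cpl μ ν).Nonempty := ⟨⟨μ.prod ν, inferInstance⟩, by
    constructor
    · show (μ.prod ν).map Prod.fst = μ
      simp
    · show (μ.prod ν).map Prod.snd = ν
      simp⟩
  have hc : ContinuousOn (fun P : ProbabilityMeasure (Ed dx × Ed dy) =>
      crossCov (P : Measure (Ed dx × Ed dy))) (cpl μ ν) :=
    continuousOn_pi.2 fun i => continuousOn_pi.2 fun j => crossCov_cont hμ hν hμ4 hν4 i j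
  obtain ⟨P, hP, hmin⟩ := (cpl_compact hμ hν).exists_isMinOn hne (hg.comp_continuousOn hc)
  refine ⟨P, hP, fun π' h' => ?_⟩
  exact hmin (a := ⟨π', coupling_prob hμ h'⟩) h'

lemma frobSq_nonneg (A : Matrix (Fin dx) (Fin dy) ℝ) : 0 ≤ frobSq A :=
  Finset.sum_nonneg fun _ _ => Finset.sum_nonneg fun _ _ => sq_nonneg _

lemma frobSq_zero {A : Matrix (Fin dx) (Fin dy) ℝ} (h : frobSq A ≤ 0) : A = 0 := by
  have h0 : frobSq A = 0 := le_antisymm h (frobSq_nonneg A)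
  ext i j
  have h1 := (Finset.sum_eq_zero_iff_of_nonneg (s := Finset.univ)
    (f := fun i => ∑ j, A i j ^ 2)
    fun _ _ => Finset.sum_nonneg fun _ _ => sq_nonneg _).1 h0 i (Finset.mem_univ i)
  have h2 := (Finset.sum_eq_zero_iff_of_nonneg (s := Finset.univ)
    (f := fun j => A i j ^ 2) fun _ _ => sq_nonneg _).1 h1 j (Finset.mem_univ j)
  exact pow_eq_zero_iff (two_ne_zero) |>.1 h2

lemma exists_optOT {μ : Measure (Ed dx)} {ν : Measure (Ed dy)}
    (hμ : IsProbabilityMeasure μ) (hν : IsProbabilityMeasure ν)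
    (hμ4 : Integrable (fun x => ‖x‖ ^ 4) μ) (hν4 : Integrable (fun y => ‖y‖ ^ 4) ν)
    (A : Matrix (Fin dx) (Fin dy) ℝ) : ∃ π, IsOptOT (costA A) π μ ν := by
  obtain ⟨π, hπ, h⟩ := exists_max hμ hν hμ4 hν4
    (fun C => -8 * ∑ i, ∑ j, A i j * C i j) (by fun_prop)
  refine ⟨π, hπ, fun π' h' => ?_⟩
  rw [int_costA hμ hν hμ4 hν4 hπ, int_costA hμ hν hμ4 hν4 h']
  exact h π' h'

lemma IOT_eq {π : Measure (Ed dx × Ed dy)} {μ : Measure (Ed dx)} {ν : Measure (Ed dy)}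
    {A : Matrix (Fin dx) (Fin dy) ℝ} (h : IsOptOT (costA A) π μ ν) :
    IOT A μ ν = ∫ p, costA A p.1 p.2 ∂π := by
  refine IsLeast.csInf_eq ⟨⟨π, h.1, rfl⟩, ?_⟩
  rintro _ ⟨π', h', rfl⟩
  exact h.2 π' h'

/-- IGW duality. -/
theorem igw_duality (dx dy : ℕ)
    (μ : Measure (Ed dx)) (ν : Measure (Ed dy))
    (hμ : IsProbabilityMeasure μ) (hν : IsProbabilityMeasure ν)
    (hμ4 : Integrable (fun x => ‖x‖ ^ 4) μ) (hν4 : Integrable (fun y => ‖y‖ ^ 4) ν) :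
    -- the dual representation
    F2 μ ν = sInf {v : ℝ | ∃ A : Matrix (Fin dx) (Fin dy) ℝ, v = 8 * frobSq A + IOT A μ ν} ∧
    -- the infimum is achieved in the rectangle `[-M/2, M/2]^{dx×dy}`
    (∃ A : Matrix (Fin dx) (Fin dy) ℝ,
      (∀ i j, |A i j| ≤ Real.sqrt (M2 μ * M2 ν) / 2) ∧
      8 * frobSq A + IOT A μ ν = F2 μ ν) ∧
    -- (i) any optimal coupling for `IOT_{A*}` with `A*` an infimizer is IGW optimal
    (∀ A : Matrix (Fin dx) (Fin dy) ℝ, 8 * frobSq A + IOT A μ ν = F2 μ ν →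
      ∀ π : Measure (Ed dx × Ed dy), IsOptOT (costA A) π μ ν →
        IsOptIGW π μ ν ∧ A = (1 / 2 : ℝ) • crossCov π) ∧
    -- (ii) conversely, any infimizer `A*` is induced by an optimal IGW coupling `π*`,
    -- which is then optimal for `IOT_{A*}`
    (∀ A : Matrix (Fin dx) (Fin dy) ℝ, 8 * frobSq A + IOT A μ ν = F2 μ ν →
      ∃ π : Measure (Ed dx × Ed dy), IsOptIGW π μ ν ∧ A = (1 / 2 : ℝ) • crossCov π ∧
        IsOptOT (costA A) π μ ν) := by
  obtain ⟨π₀, h₀, hmax⟩ := exists_max hμ hν hμ4 hν4 (fun C => -2 * frobSq C)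
    (by unfold frobSq; fun_prop)
  have hF : F2 μ ν = -2 * frobSq (crossCov π₀) := by
    refine IsLeast.csInf_eq ⟨⟨π₀, h₀, by rw [(int_cross hμ hν hμ4 hν4 h₀).2]⟩, ?_⟩
    rintro _ ⟨π', h', rfl⟩
    rw [(int_cross hμ hν hμ4 hν4 h').2]
    exact hmax π' h'
  have hlow : ∀ A : Matrix (Fin dx) (Fin dy) ℝ, F2 μ ν ≤ 8 * frobSq A + IOT A μ ν := by
    intro A
    obtain ⟨π, hπ⟩ := exists_optOT hμ hν hμ4 hν4 A
    rw [IOT_eq hπ, cost_identity hμ hν hμ4 hν4 hπ.1, hF]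
    have := hmax π hπ.1
    have := frobSq_nonneg (A - (1 / 2 : ℝ) • crossCov π)
    linarith
  have hatt : 8 * frobSq ((1 / 2 : ℝ) • crossCov π₀) + IOT ((1 / 2 : ℝ) • crossCov π₀) μ ν
      = F2 μ ν := by
    refine le_antisymm ?_ (hlow _)
    obtain ⟨π, hπ⟩ := exists_optOT hμ hν hμ4 hν4 ((1 / 2 : ℝ) • crossCov π₀)
    have h1 := hπ.2 π₀ h₀
    have h2 := cost_identity hμ hν hμ4 hν4 h₀ ((1 / 2 : ℝ) • crossCov π₀)
    rw [sub_self] at h2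
    have h3 : frobSq (0 : Matrix (Fin dx) (Fin dy) ℝ) = 0 := by simp [frobSq]
    rw [IOT_eq hπ, hF]
    linarith
  have hi : ∀ A : Matrix (Fin dx) (Fin dy) ℝ, 8 * frobSq A + IOT A μ ν = F2 μ ν →
      ∀ π : Measure (Ed dx × Ed dy), IsOptOT (costA A) π μ ν →
        IsOptIGW π μ ν ∧ A = (1 / 2 : ℝ) • crossCov π := by
    intro A hA π hπ
    rw [IOT_eq hπ, cost_identity hμ hν hμ4 hν4 hπ.1, hF] at hA
    have h1 := hmax π hπ.1
    have h2 := frobSq_nonneg (A - (1 / 2 : ℝ) • crossCov π)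
    refine ⟨⟨hπ.1, fun π' h' => ?_⟩, ?_⟩
    · rw [igw_eq hμ hν hμ4 hν4 hπ.1, igw_eq hμ hν hμ4 hν4 h']
      have h3 := hmax π' h'
      linarith
    · exact sub_eq_zero.1 (frobSq_zero (by linarith))
  refine ⟨?_, ⟨_, fun i j => ?_, hatt⟩, hi, ?_⟩
  · symm
    refine IsLeast.csInf_eq ⟨⟨_, hatt.symm⟩, ?_⟩
    rintro _ ⟨A, rfl⟩
    exact hlow A
  · have := crossCov_bound hμ hν hμ4 hν4 h₀ i j
    rw [Matrix.smul_apply, smul_eq_mul, abs_mul, abs_of_pos (by norm_num : (0 : ℝ) < 1 / 2)]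
    linarith
  · intro A hA
    obtain ⟨π, hπ⟩ := exists_optOT hμ hν hμ4 hν4 A
    obtain ⟨h1, h2⟩ := hi A hA π hπ
    exact ⟨π, h1, h2, hπ⟩
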